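/- Let α_1, …, α_r be an orthogonal sequence of long roots in Φ(g/p). Then for every root γ ∈ Φ with m_α(γ) = 0 there is at most one index i ∈ {1, …, r} such that ⟨γ, α_i⟩ = −1. -/

import Mathlib

open scoped RealInnerProductSpace

/-- The Cartan pairing `⟨β, γ⟩ = 2(β,γ)/(γ,γ)`. -/
noncomputable def rpair {V : Type*} [NormedAddCommGroup V] [InnerProductSpace ℝ V]
    (β γ : V) : ℝ := 2 * ⟪β, γ⟫ / ⟪γ, γ⟫

/-- An irreducible reduced crystallographic root system in a real inner product space,
equipped with a base `Δ` of simple roots, the coefficient function `m` (so that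
`β = ∑_{δ ∈ Δ} m β δ • δ` for roots `β`) and the highest root `θ`. -/
structure IrredRootSystem (V : Type*) [NormedAddCommGroup V] [InnerProductSpace ℝ V] where
  Φ : Set V
  Δ : Finset V
  m : V → V → ℤ
  θ : V
  finite : Φ.Finite
  zero_notMem : (0 : V) ∉ Φ
  spans : Submodule.span ℝ Φ = ⊤
  neg_mem : ∀ β ∈ Φ, -β ∈ Φ
  reflect_mem : ∀ β ∈ Φ, ∀ γ ∈ Φ, β - rpair β γ • γ ∈ Φ
  crystallographic : ∀ β ∈ Φ, ∀ γ ∈ Φ, ∃ z : ℤ, rpair β γ = z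
  reduced : ∀ β ∈ Φ, ∀ t : ℝ, t • β ∈ Φ → t = 1 ∨ t = -1
  irreducible : ¬ ∃ A B : Set V, A.Nonempty ∧ B.Nonempty ∧ Disjoint A B ∧ A ∪ B = Φ ∧
      ∀ β ∈ A, ∀ γ ∈ B, ⟪β, γ⟫ = 0
  base_subset : ↑Δ ⊆ Φ
  base_indep : LinearIndependent ℝ (fun δ : Δ => (δ : V))
  base_repr : ∀ β ∈ Φ, β = ∑ δ ∈ Δ, (m β δ : ℝ) • δ
  base_sign : ∀ β ∈ Φ, (∀ δ ∈ Δ, 0 ≤ m β δ) ∨ (∀ δ ∈ Δ, m β δ ≤ 0)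
  theta_mem : θ ∈ Φ
  theta_highest : ∀ β ∈ Φ, ∀ δ ∈ Δ, m β δ ≤ m θ δ

namespace IrredRootSystem

variable {V : Type*} [NormedAddCommGroup V] [InnerProductSpace ℝ V]

/-- The positive roots `Φ⁺`. -/
def Pos (D : IrredRootSystem V) : Set V := {β | β ∈ D.Φ ∧ ∀ δ ∈ D.Δ, 0 ≤ D.m β δ}

/-- The negative roots `Φ⁻`. -/
def Neg (D : IrredRootSystem V) : Set V := {β | β ∈ D.Φ ∧ ∀ δ ∈ D.Δ, D.m β δ ≤ 0}

/-- A long root: a root of maximal squared length. -/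
def IsLong (D : IrredRootSystem V) (β : V) : Prop :=
  β ∈ D.Φ ∧ ∀ γ ∈ D.Φ, ⟪γ, γ⟫ ≤ ⟪β, β⟫

/-- `Φ(g/p)`: the roots whose coefficient on the cominuscule simple root `α` is `1`. -/
def gp (D : IrredRootSystem V) (α : V) : Set V := {β | β ∈ D.Φ ∧ D.m β α = 1}

/-- An orthogonal sequence of long roots in `Φ(g/p)`. -/
def IsOrthLongSeq (D : IrredRootSystem V) (α : V) {r : ℕ} (a : Fin r → V) : Prop :=
  (∀ i, D.IsLong (a i)) ∧ (∀ i, a i ∈ D.gp α) ∧ ∀ i j, i ≠ j → ⟪a i, a j⟫ = 0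

end IrredRootSystem

/-!
Reflecting a root `γ` successively in pairwise orthogonal roots `a i` subtracts `⟨γ, a i⟩ • a i` at
each step, since subtracting multiples of the earlier `a i` does not change the pairing with a later
one. The result is a root, so its coefficient at `α` is at most that of the highest root. If two of
the integers `⟨γ, a i⟩` were negative, reflecting in those two roots would raise the coefficient of
`γ` at `α` above this maximum, because each `a i` contributes more than half of it.
-/

lemma rpair_sub_of_inner_eq_zero {V : Type*} [NormedAddCommGroup V] [InnerProductSpace ℝ V]
    {β γ v : V} (hv : ⟪v, β⟫ = 0) : rpair (γ - v) β = rpair γ β := by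
  rw [rpair, rpair, inner_sub_left, hv, sub_zero]

namespace IrredRootSystem

variable {V : Type*} [NormedAddCommGroup V] [InnerProductSpace ℝ V] (D : IrredRootSystem V)

lemma rpair_le_neg_one_of_neg {β γ : V} (hβ : β ∈ D.Φ) (hγ : γ ∈ D.Φ) (hneg : rpair β γ < 0) :
    rpair β γ ≤ -1 := by
  obtain ⟨z, hz⟩ := D.crystallographic β hβ γ hγ
  rw [hz] at hneg ⊢
  exact_mod_cast Int.le_sub_one_of_lt (Int.cast_lt_zero.mp hneg)

lemma top_le_span_base : ⊤ ≤ Submodule.span ℝ (Set.range fun δ : D.Δ => (δ : V)) := by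
  rw [← D.spans, Submodule.span_le]
  intro β hβ
  rw [D.base_repr β hβ]
  exact Submodule.sum_mem _ fun δ hδ =>
    Submodule.smul_mem _ _ (Submodule.subset_span ⟨⟨δ, hδ⟩, rfl⟩)

/-- The simple roots as a vector space basis; its coordinates extend the integer coefficients
`D.m β δ`, meaningful only for roots `β`, to linear functionals. -/
noncomputable def simpleBasis : Module.Basis D.Δ ℝ V :=
  Module.Basis.mk D.base_indep D.top_le_span_base

lemma simpleBasis_repr_of_mem {β : V} (hβ : β ∈ D.Φ) (δ : D.Δ) :
    D.simpleBasis.repr β δ = D.m β δ := by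
  have hsum : ∑ δ : D.Δ, (D.m β δ : ℝ) • D.simpleBasis δ = β := by
    simp only [simpleBasis, Module.Basis.mk_apply]
    rw [Finset.sum_coe_sort D.Δ fun δ => (D.m β δ : ℝ) • δ, ← D.base_repr β hβ]
  have hrepr := D.simpleBasis.repr_sum_self fun δ => (D.m β δ : ℝ)
  rw [hsum] at hrepr
  exact congrFun hrepr δ

variable {ι : Type*} {a : ι → V}

lemma sub_sum_rpair_smul_mem (ha : ∀ i, a i ∈ D.Φ) (horth : Pairwise fun i j => ⟪a i, a j⟫ = 0)
    {γ : V} (hγ : γ ∈ D.Φ) (s : Finset ι) : γ - ∑ i ∈ s, rpair γ (a i) • a i ∈ D.Φ := by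
  classical
  induction s using Finset.induction_on with
  | empty => simpa only [Finset.sum_empty, sub_zero] using hγ
  | insert j s hj ih =>
    have hsum_orth : ⟪∑ i ∈ s, rpair γ (a i) • a i, a j⟫ = 0 := by
      rw [sum_inner]
      refine Finset.sum_eq_zero fun i hi => ?_
      rw [real_inner_smul_left, horth (ne_of_mem_of_not_mem hi hj), mul_zero]
    rw [Finset.sum_insert hj, add_comm, ← sub_sub, ← rpair_sub_of_inner_eq_zero hsum_orth]
    exact D.reflect_mem _ ih (a j) (ha j)

lemma m_sub_sum_rpair_mul_le (ha : ∀ i, a i ∈ D.Φ)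
    (horth : Pairwise fun i j => ⟪a i, a j⟫ = 0) {γ : V} (hγ : γ ∈ D.Φ) (s : Finset ι)
    {δ : V} (hδ : δ ∈ D.Δ) :
    D.m γ δ - ∑ i ∈ s, rpair γ (a i) * D.m (a i) δ ≤ (D.m D.θ δ : ℝ) := by
  set ρ := γ - ∑ i ∈ s, rpair γ (a i) • a i with hρ
  have hρ_mem : ρ ∈ D.Φ := D.sub_sum_rpair_smul_mem ha horth hγ s
  let coord := D.simpleBasis.coord ⟨δ, hδ⟩
  have hcoord {β : V} (hβ : β ∈ D.Φ) : coord β = D.m β δ := D.simpleBasis_repr_of_mem hβ ⟨δ, hδ⟩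
  calc D.m γ δ - ∑ i ∈ s, rpair γ (a i) * D.m (a i) δ
      = coord ρ := by
        simp only [hρ, map_sub, map_sum, map_smul, smul_eq_mul, hcoord hγ, hcoord (ha _)]
    _ = D.m ρ δ := hcoord hρ_mem
    _ ≤ D.m D.θ δ := Int.cast_le.mpr (D.theta_highest ρ hρ_mem δ hδ)

end IrredRootSystem

theorem at_most_one_pairing_neg_one_general {V : Type*} [NormedAddCommGroup V]
    [InnerProductSpace ℝ V] (D : IrredRootSystem V) {α : V} (hα : α ∈ D.Δ)
    {ι : Type*} {a : ι → V} (ha : ∀ i, a i ∈ D.Φ) (hcoeff : ∀ i, D.m D.θ α < 2 * D.m (a i) α)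
    (horth : Pairwise fun i j => ⟪a i, a j⟫ = 0)
    {γ : V} (hγ : γ ∈ D.Φ) (hγα : 0 ≤ D.m γ α) :
    {i | rpair γ (a i) < 0}.Subsingleton := by
  classical
  intro i hi j hj
  by_contra hij
  have hbound := D.m_sub_sum_rpair_mul_le ha horth hγ {i, j} hα
  rw [Finset.sum_pair hij] at hbound
  have hlower (k : ι) (hk : rpair γ (a k) < 0) :
      (D.m (a k) α : ℝ) ≤ -(rpair γ (a k) * D.m (a k) α) := by
    have hpos : 0 ≤ D.m (a k) α := by
      linarith [hcoeff k, D.theta_highest (a k) (ha k) α hα]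
    rw [← neg_mul]
    exact le_mul_of_one_le_left (Int.cast_nonneg hpos)
      (le_neg_of_le_neg (D.rpair_le_neg_one_of_neg hγ (ha k) hk))
  have hγα_cast : (0 : ℝ) ≤ D.m γ α := Int.cast_nonneg hγα
  have hsum_le : (D.m (a i) α + D.m (a j) α : ℝ) ≤ D.m D.θ α := by
    linarith [hlower i hi, hlower j hj]
  norm_cast at hsum_le
  linarith [hcoeff i, hcoeff j]

/-- For an orthogonal sequence of long roots in `Φ(g/p)` and a root `γ`
with `m_α(γ) = 0`, there is at most one index `i` with `⟨γ, α_i⟩ = -1`. -/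
theorem at_most_one_pairing_neg_one {V : Type*} [NormedAddCommGroup V]
    [InnerProductSpace ℝ V] (D : IrredRootSystem V)
    (α : V) (hα : α ∈ D.Δ) (hcom : D.m D.θ α = 1)
    {r : ℕ} (a : Fin r → V) (ha : D.IsOrthLongSeq α a)
    (γ : V) (hγ : γ ∈ D.Φ) (hγα : D.m γ α = 0) :
    ∀ i j : Fin r, rpair γ (a i) = -1 → rpair γ (a j) = -1 → i = j := by
  intro i j hi hj
  exact at_most_one_pairing_neg_one_general D hα (fun k => (ha.2.1 k).1)
    (fun k => by linarith [hcom, (ha.2.1 k).2]) ha.2.2 hγ hγα.ge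
    (hi.trans_lt neg_one_lt_zero) (hj.trans_lt neg_one_lt_zero)
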